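/- The Eisenstein series E₄ satisfies the third-order nonlinear ODE: for every τ ∈ ℍ, 80E₄²(E₄''')² + 120(5(E₄')³ − 6E₄E₄'E₄'')E₄''' + 576E₄(E₄'')³ − 20(27(E₄')² + 4E₄³)(E₄'')² + 200E₄²(E₄')²E₄'' − 125E₄(E₄')⁴ = 0. -/

import Mathlib

open Complex

noncomputable section

/-- The normalized derivative `F' = (2πi)⁻¹ dF/dτ`. -/
def nderiv (F : ℂ → ℂ) : ℂ → ℂ := fun τ => (2 * Real.pi * Complex.I)⁻¹ * deriv F τ

/-- `q = e^{2πiτ}`. -/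
def qq (τ : ℂ) : ℂ := Complex.exp (2 * Real.pi * Complex.I * τ)

/-- Sum of the `k`-th powers of the positive divisors of `n`. -/
def sigma' (k n : ℕ) : ℕ := ∑ d ∈ n.divisors, d ^ k

/-- The Eisenstein series `E₄`. -/
def E4 : ℂ → ℂ := fun τ => 1 + 240 * ∑' n : ℕ, (sigma' 3 (n + 1) : ℂ) * qq τ ^ (n + 1)

namespace Aux
open UpperHalfPlane hiding I
open Real ModularForm EisensteinSeries Derivative Filter
open scoped Manifold MatrixGroups ModularForm Topology

/-- Vanishing of small weight level one cusp forms, for bare functions. -/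
lemma eq_zero_of_cusp {k : ℤ} (hk : k < 12) (f : ℍ → ℂ) (hf : MDiff f)
    (hinv : ∀ γ : SL(2, ℤ), f ∣[k] γ = f) (h0 : IsZeroAtImInfty f) : f = 0 := by
  let F : CuspForm 𝒮ℒ k :=
    { toFun := f
      slash_action_eq' := by
        rintro A ⟨A, rfl⟩
        exact hinv A
      holo' := hf
      zero_at_cusps' := by
        intro c hc
        rw [Subgroup.IsArithmetic.isCusp_iff_isCusp_SL2Z] at hc
        rw [OnePoint.isZeroAt_iff_forall_SL2Z hc]
        intro γ _
        rw [hinv]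
        exact h0 }
  have hF : F = 0 := rank_zero_iff_forall_zero.mp (CuspForm.rank_eq_zero_of_weight_lt_twelve hk) F
  have : (F : ℍ → ℂ) = 0 := by rw [hF]; rfl
  exact this

lemma tendsto_of_hasSum {f : ℍ → ℂ} {c : ℕ → ℂ}
    (hf : ∀ τ : ℍ, HasSum (fun m ↦ c m • Function.Periodic.qParam 1 τ ^ m) (f τ)) :
    Tendsto f atImInfty (𝓝 (c 0)) := by
  have hq : ∀ τ : ℍ, Function.Periodic.qParam 1 τ ≠ 0 := fun τ => by
    simp [Function.Periodic.qParam]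
  let g : ℍ → ℂ := fun τ => (f τ - c 0) / Function.Periodic.qParam 1 τ
  have hg : ∀ τ : ℍ, HasSum (fun m ↦ c (m + 1) • Function.Periodic.qParam 1 τ ^ m) (g τ) := by
    intro τ
    have h1 := (hasSum_nat_add_iff' 1).mpr (hf τ)
    have h2 := h1.div_const (Function.Periodic.qParam 1 τ)
    have e1 : (fun m : ℕ ↦ c (m + 1) • Function.Periodic.qParam 1 τ ^ m) = fun m : ℕ ↦
        c (m + 1) • Function.Periodic.qParam 1 τ ^ (m + 1) / Function.Periodic.qParam 1 τ := by
      ext m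
      have := hq τ
      simp only [smul_eq_mul, pow_succ]
      field_simp
    rw [e1]
    simpa [g] using h2
  have hb : IsBoundedAtImInfty g := isBoundedAtImInfty_of_hasSum_qExpansion one_pos hg
  have hz : Tendsto (fun τ : ℍ => Function.Periodic.qParam 1 τ * g τ) atImInfty (𝓝 0) := by
    have h0 := qParam_tendsto_atImInfty (h := 1) one_pos
    have hb' : (g) =O[atImInfty] (1 : ℍ → ℝ) := hb
    exact h0.zero_mul_isBoundedUnder_le ((Asymptotics.isBigO_one_iff ℝ).mp hb')
  have : f = fun τ : ℍ => c 0 + Function.Periodic.qParam 1 τ * g τ := by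
    ext τ
    have := hq τ
    simp only [g]
    field_simp
    ring
  rw [this]
  simpa using hz.const_add (c 0)

lemma tendsto_E2 : Tendsto E2 atImInfty (𝓝 1) := by
  have := tendsto_of_hasSum (f := E2) (c := fun m => if m = 0 then 1 else -24 * ArithmeticFunction.sigma 1 m) fun τ ↦ by
    simpa only [Function.Periodic.qParam, Complex.ofReal_one, div_one] using hasSum_qExpansion_E2 (z := τ)
  simpa using this

lemma tendsto_E {k : ℕ} (hk : 3 ≤ k) (hk2 : Even k) :
    Tendsto (E hk : ℍ → ℂ) atImInfty (𝓝 1) := by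
  have := tendsto_of_hasSum (f := E hk) (c := fun m => (qExpansion 1 (E hk)).coeff m) fun τ ↦
    hasSum_qExpansion one_pos (SlashInvariantFormClass.periodic_comp_ofComplex (E hk)
      one_mem_strictPeriods_SL) (E hk).holo' (ModularFormClass.bdd_at_infty (E hk)) τ
  simpa only [E_qExpansion_coeff_zero hk hk2] using this

lemma zero_D {f : ℍ → ℂ} (hf : MDiff f) (hb : IsBoundedAtImInfty f) :
    Tendsto (normalizedDerivOfComplex f) atImInfty (𝓝 0) := by
  rw [isBoundedAtImInfty_iff] at hb
  obtain ⟨M, A, hM⟩ := hb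
  rw [UpperHalfPlane.mdifferentiable_iff] at hf
  have key : ∀ᶠ z : ℍ in atImInfty, ‖deriv (f ∘ ofComplex) z‖ ≤ M / (z.im / 2) := by
    have h1 : ∀ᶠ z : ℍ in atImInfty, 2 * A ≤ z.im :=
      tendsto_comap.eventually (eventually_ge_atTop (2 * A))
    filter_upwards [h1] with z hz
    have hzp := z.im_pos
    have him : ∀ w ∈ Metric.closedBall (z : ℂ) (z.im / 2), z.im / 2 ≤ w.im := by
      intro w hw
      rw [Metric.mem_closedBall, dist_eq_norm] at hw
      have := (Complex.abs_im_le_norm (w - z)).trans hw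
      rw [abs_le] at this
      have h3 := this.1
      simp only [Complex.sub_im, UpperHalfPlane.coe_im] at h3
      linarith
    apply Complex.norm_deriv_le_of_forall_mem_sphere_norm_le (by positivity)
    · apply DifferentiableOn.diffContOnCl_ball (U := upperHalfPlaneSet) hf
      intro w hw
      exact lt_of_lt_of_le (by positivity) (him w hw)
    · intro w hw
      have h := him w (Metric.sphere_subset_closedBall hw)
      have hw0 : 0 < w.im := by linarith
      simp only [Function.comp_apply, ofComplex_apply_of_im_pos hw0]
      apply hM
      change A ≤ w.im
      linarith
  have hlim : Tendsto (fun z : ℍ => M / (z.im / 2)) atImInfty (𝓝 0) := by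
    apply Tendsto.const_div_atTop
    exact Tendsto.atTop_div_const (by norm_num) tendsto_comap
  have h2 : Tendsto (fun z : ℍ => deriv (f ∘ ofComplex) z) atImInfty (𝓝 0) :=
    squeeze_zero_norm' key hlim
  have h3 := h2.const_mul ((2 * π * Complex.I)⁻¹)
  rw [mul_zero] at h3
  exact h3

lemma inv_E {k : ℕ} (hk : 3 ≤ k) (γ : SL(2, ℤ)) : (E hk : ℍ → ℂ) ∣[(k : ℤ)] γ = E hk :=
  SlashInvariantForm.slash_action_eqn (E hk) _ ⟨γ, rfl⟩

lemma mdiff_E {k : ℕ} (hk : 3 ≤ k) : MDiff (E hk : ℍ → ℂ) := (E hk).holo'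

lemma bdd_E {k : ℕ} (hk : 3 ≤ k) : IsBoundedAtImInfty (E hk : ℍ → ℂ) :=
  ModularFormClass.bdd_at_infty (E hk)

lemma serre_E2_inv (γ : SL(2, ℤ)) :
    serreDerivative 1 E2 ∣[(4 : ℤ)] γ = serreDerivative 1 E2 := by
  ext z
  have hden := denom_ne_zero γ z
  have hD := congrFun (normalizedDerivOfComplex_SL_slash (k := 2) E2_mdifferentiable (γ := γ)) z
  have hE := congrFun (E2_slash_action γ) z
  have hderiv : HasDerivAt (fun w : ℂ => 2 * π * Complex.I * γ 1 0 / denom γ w)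
      (- (2 * π * Complex.I * γ 1 0 * γ 1 0) / denom γ z ^ 2) z := by
    have h := (hasDerivAt_denom_zpow (γ : GL (Fin 2) ℝ) (-1) z).const_mul
      (2 * π * Complex.I * (γ 1 0 : ℂ))
    have e1 : (fun w : ℂ => 2 * π * Complex.I * γ 1 0 / denom γ w) =
        fun w : ℂ => 2 * π * Complex.I * (γ 1 0 : ℂ) * denom γ w ^ (-1 : ℤ) := by
      ext w
      rw [zpow_neg_one, div_eq_mul_inv]
    rw [e1]
    refine h.congr_deriv ?_
    have e2 : (-1 - 1 : ℤ) = -((2 : ℕ) : ℤ) := by norm_num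
    rw [e2, zpow_neg, zpow_natCast]
    simp [div_eq_mul_inv]
    ring
  have hcomp : (D2 γ) ∘ ofComplex =ᶠ[𝓝 (z : ℂ)]
      (fun w : ℂ => 2 * π * Complex.I * γ 1 0 / denom γ w) := by
    filter_upwards [isOpen_upperHalfPlaneSet.mem_nhds z.im_pos] with w hw
    simp [D2, ofComplex_apply_of_im_pos hw]
  have hD2d := hderiv.congr_of_eventuallyEq hcomp
  have hED := UpperHalfPlane.mdifferentiableAt_iff.mp (E2_mdifferentiable z)
  have hDE : normalizedDerivOfComplex (E2 ∣[(2 : ℤ)] γ) z = normalizedDerivOfComplex E2 z -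
      (2 * π * Complex.I)⁻¹ * ((1 / (2 * riemannZeta 2)) *
        (- (2 * π * Complex.I * γ 1 0 * γ 1 0) / denom γ z ^ 2)) := by
    rw [E2_slash_action]
    have := (hED.hasDerivAt.sub (hD2d.const_mul (1 / (2 * riemannZeta 2)))).deriv
    simp only [normalizedDerivOfComplex]
    rw [← mul_sub, ← this]
    rfl
  have hmul := congrFun (ModularForm.mul_slash_SL2 2 2 γ E2 E2) z
  have hL : (serreDerivative 1 E2 ∣[(4 : ℤ)] γ) z =
      (normalizedDerivOfComplex E2 ∣[(4 : ℤ)] γ) z -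
        12⁻¹ * ((E2 ∣[(2 : ℤ)] γ) z * (E2 ∣[(2 : ℤ)] γ) z) := by
    have : (E2 ∣[(2 : ℤ)] γ) z * (E2 ∣[(2 : ℤ)] γ) z = ((E2 * E2) ∣[(4 : ℤ)] γ) z := hmul.symm
    rw [this]
    simp only [ModularForm.SL_slash_apply, serreDerivative_apply, Pi.mul_apply]
    ring
  rw [hDE] at hD
  simp only [Pi.sub_apply] at hD
  have hD' : (normalizedDerivOfComplex E2 ∣[(4 : ℤ)] γ) z = _ := (sub_eq_iff_eq_add.mp hD.symm)
  rw [hL, hD', hE]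
  simp only [serreDerivative_apply, Pi.sub_apply, Pi.smul_apply, smul_eq_mul, D2, riemannZeta_two]
  have hpi : (π : ℂ) ≠ 0 := by exact_mod_cast Real.pi_ne_zero
  have hI := Complex.I_ne_zero
  field_simp
  have hI2 := Complex.I_sq
  push_cast
  grind

lemma ram2 (z : ℍ) : normalizedDerivOfComplex E2 z = (E2 z ^ 2 - E₄ z) / 12 := by
  have h := eq_zero_of_cusp (k := 4) (by norm_num) (serreDerivative 1 E2 + (1 / 12 : ℂ) • ⇑E₄)
    ((serreDerivative_mdifferentiable 1 E2_mdifferentiable).add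
      ((mdiff_E _).const_smul _))
    (fun γ => by
      rw [SlashAction.add_slash, serre_E2_inv, ModularForm.SL_smul_slash]
      congr 2
      exact inv_E _ γ)
    (by
      have h1 := ((zero_D E2_mdifferentiable isBoundedAtImInfty_E2).sub
        ((tendsto_E2.mul tendsto_E2).const_mul (1 / 12 : ℂ))).add
        ((tendsto_E (k := 4) (by norm_num) ⟨2, rfl⟩).const_mul (1 / 12 : ℂ))
      norm_num at h1
      refine h1.congr fun z => ?_
      simp
      ring)
  have := congrFun h z
  simp at this
  linear_combination this

lemma ram4 (z : ℍ) : normalizedDerivOfComplex E₄ z = (E2 z * E₄ z - E₆ z) / 3 := by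
  have h := eq_zero_of_cusp (k := 6) (by norm_num)
    (serreDerivative ((4 : ℤ) : ℂ) E₄ + (1 / 3 : ℂ) • ⇑E₆)
    ((serreDerivative_mdifferentiable _ (mdiff_E _)).add
      ((mdiff_E _).const_smul _))
    (fun γ => by
      rw [SlashAction.add_slash, ModularForm.SL_smul_slash]
      congr 1
      · exact serreDerivative_slash_invariant (k := 4) (mdiff_E _) (inv_E _ γ)
      · congr 1
        exact inv_E _ γ)
    (by
      have h1 := ((zero_D (mdiff_E (k := 4) (by norm_num)) (bdd_E _)).sub
        ((tendsto_E2.mul (tendsto_E (k := 4) (by norm_num) ⟨2, rfl⟩)).const_mul (1 / 3 : ℂ))).add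
        ((tendsto_E (k := 6) (by norm_num) ⟨3, rfl⟩).const_mul (1 / 3 : ℂ))
      norm_num at h1
      refine h1.congr fun z => ?_
      simp
      ring)
  have := congrFun h z
  simp at this
  linear_combination this

lemma ram6 (z : ℍ) : normalizedDerivOfComplex E₆ z = (E2 z * E₆ z - E₄ z ^ 2) / 2 := by
  have h := eq_zero_of_cusp (k := 8) (by norm_num)
    (serreDerivative ((6 : ℤ) : ℂ) E₆ + (1 / 2 : ℂ) • (⇑E₄ * ⇑E₄))
    ((serreDerivative_mdifferentiable _ (mdiff_E _)).add
      (((mdiff_E _).mul (mdiff_E _)).const_smul _))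
    (fun γ => by
      rw [SlashAction.add_slash, ModularForm.SL_smul_slash]
      congr 1
      · exact serreDerivative_slash_invariant (k := 6) (mdiff_E _) (inv_E _ γ)
      · congr 1
        refine (ModularForm.mul_slash_SL2 4 4 γ E₄ E₄).trans ?_
        have := inv_E (k := 4) (by norm_num) γ
        norm_cast at this ⊢
        rw [this])
    (by
      have h4 := tendsto_E (k := 4) (by norm_num) ⟨2, rfl⟩
      have h1 := ((zero_D (mdiff_E (k := 6) (by norm_num)) (bdd_E _)).sub
        ((tendsto_E2.mul (tendsto_E (k := 6) (by norm_num) ⟨3, rfl⟩)).const_mul (1 / 2 : ℂ))).add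
        ((h4.mul h4).const_mul (1 / 2 : ℂ))
      norm_num at h1
      refine h1.congr fun z => ?_
      simp
      ring)
  have := congrFun h z
  simp at this
  linear_combination this

lemma hasDerivAt_of {f : ℍ → ℂ} (hf : MDiff f) (z : ℍ) :
    HasDerivAt (f ∘ ofComplex) (2 * π * Complex.I * normalizedDerivOfComplex f z) z := by
  have h := (UpperHalfPlane.mdifferentiableAt_iff.mp (hf z)).hasDerivAt
  have hpi : (π : ℂ) ≠ 0 := by exact_mod_cast Real.pi_ne_zero
  have hI := Complex.I_ne_zero
  refine h.congr_deriv ?_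
  simp only [normalizedDerivOfComplex]
  field_simp

lemma nderiv_of {F G : ℂ → ℂ} (h : ∀ w : ℂ, 0 < w.im → F w = G w) {τ d : ℂ} (hτ : 0 < τ.im)
    (hG : HasDerivAt G (2 * π * Complex.I * d) τ) : nderiv F τ = d := by
  have he : F =ᶠ[𝓝 τ] G := by
    filter_upwards [isOpen_upperHalfPlaneSet.mem_nhds hτ] with w hw using h w hw
  have hpi : (π : ℂ) ≠ 0 := by exact_mod_cast Real.pi_ne_zero
  have hI := Complex.I_ne_zero
  rw [nderiv, he.deriv_eq, hG.deriv]
  field_simp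

lemma E4_eq (w : ℂ) (hw : 0 < w.im) : E4 w = (E₄ ∘ ofComplex) w := by
  simp only [Function.comp_apply, ofComplex_apply_of_im_pos hw]
  rw [q_expansion_bernoulli (by norm_num) ⟨2, rfl⟩]
  have hb : bernoulli 4 = -1 / 30 := by
    rw [bernoulli_eq_bernoulli'_of_ne_one (by norm_num), bernoulli'_four]
  have := tsum_pnat_eq_tsum_succ (f := fun n : ℕ =>
    (ArithmeticFunction.sigma 3 n : ℂ) * Complex.exp (2 * π * Complex.I * w) ^ n)
  rw [hb]
  simp only [E4, qq, sigma']
  norm_num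
  rw [this]
  simp [ArithmeticFunction.sigma_apply]

end Aux

open Aux in
/-- The Eisenstein series `E₄` satisfies a third-order nonlinear ODE. -/
theorem E4_third_order_ODE :
    ∀ τ : ℂ, 0 < τ.im →
      80 * E4 τ ^ 2 * (nderiv (nderiv (nderiv E4)) τ) ^ 2 +
      120 * (5 * (nderiv E4 τ) ^ 3 - 6 * E4 τ * nderiv E4 τ * nderiv (nderiv E4) τ) *
        nderiv (nderiv (nderiv E4)) τ +
      576 * E4 τ * (nderiv (nderiv E4) τ) ^ 3 -
      20 * (27 * (nderiv E4 τ) ^ 2 + 4 * E4 τ ^ 3) * (nderiv (nderiv E4) τ) ^ 2 +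
      200 * E4 τ ^ 2 * (nderiv E4 τ) ^ 2 * nderiv (nderiv E4) τ -
      125 * E4 τ * (nderiv E4 τ) ^ 4 = 0 := by
  let P : ℂ → ℂ := EisensteinSeries.E2 ∘ UpperHalfPlane.ofComplex
  let Q : ℂ → ℂ := ModularForm.E₄ ∘ UpperHalfPlane.ofComplex
  let R : ℂ → ℂ := ModularForm.E₆ ∘ UpperHalfPlane.ofComplex
  have hP : ∀ w : ℂ, 0 < w.im →
      HasDerivAt P (2 * Real.pi * Complex.I * ((P w ^ 2 - Q w) / 12)) w := by
    intro w hw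
    have h := hasDerivAt_of E2_mdifferentiable ⟨w, hw⟩
    rw [ram2] at h
    simpa only [P, Q, Function.comp_apply, UpperHalfPlane.ofComplex_apply_of_im_pos hw] using h
  have hQ : ∀ w : ℂ, 0 < w.im →
      HasDerivAt Q (2 * Real.pi * Complex.I * ((P w * Q w - R w) / 3)) w := by
    intro w hw
    have h := hasDerivAt_of (mdiff_E (k := 4) (by norm_num)) ⟨w, hw⟩
    rw [ram4] at h
    simpa only [P, Q, R, Function.comp_apply, UpperHalfPlane.ofComplex_apply_of_im_pos hw] using h
  have hR : ∀ w : ℂ, 0 < w.im →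
      HasDerivAt R (2 * Real.pi * Complex.I * ((P w * R w - Q w ^ 2) / 2)) w := by
    intro w hw
    have h := hasDerivAt_of (mdiff_E (k := 6) (by norm_num)) ⟨w, hw⟩
    rw [ram6] at h
    simpa only [P, Q, R, Function.comp_apply, UpperHalfPlane.ofComplex_apply_of_im_pos hw] using h
  have h0 : ∀ w : ℂ, 0 < w.im → E4 w = Q w := E4_eq
  have h1 : ∀ w : ℂ, 0 < w.im → nderiv E4 w = (P w * Q w - R w) / 3 :=
    fun w hw => nderiv_of h0 hw (hQ w hw)
  have h2 : ∀ w : ℂ, 0 < w.im → nderiv (nderiv E4) w =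
      (5 * P w ^ 2 * Q w - 10 * P w * R w + 5 * Q w ^ 2) / 36 := by
    intro w hw
    refine nderiv_of (G := fun w => (P w * Q w - R w) / 3) h1 hw ?_
    refine ((((hP w hw).mul (hQ w hw)).sub (hR w hw)).div_const 3).congr_deriv ?_
    ring
  have h3 : ∀ w : ℂ, 0 < w.im → nderiv (nderiv (nderiv E4)) w =
      (5 * (2 * P w * ((P w ^ 2 - Q w) / 12) * Q w + P w ^ 2 * ((P w * Q w - R w) / 3))
        - 10 * ((P w ^ 2 - Q w) / 12 * R w + P w * ((P w * R w - Q w ^ 2) / 2))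
        + 10 * Q w * ((P w * Q w - R w) / 3)) / 36 := by
    intro w hw
    refine nderiv_of (G := fun w => (5 * (P w ^ 2 * Q w) - 10 * (P w * R w) + 5 * Q w ^ 2) / 36)
      (fun w hw => by rw [h2 w hw]; ring) hw ?_
    refine ((((((hP w hw).pow 2).mul (hQ w hw)).const_mul 5).sub
      (((hP w hw).mul (hR w hw)).const_mul 10)).add
      (((hQ w hw).pow 2).const_mul 5) |>.div_const 36).congr_deriv ?_
    simp
    ring
  intro τ hτ
  rw [h0 τ hτ, h1 τ hτ, h2 τ hτ, h3 τ hτ]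
  ring
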